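/- Let K ≥ 1, let i_1, …, i_K be integers with i_k ≥ 1 for all k, let p ∈ {0,1}, and set h = Π_{k=1}^{K} P_{2·i_k} + (−1)^p. Then every complex root of h is real if and only if one of the following holds: (a) K = 1; (b) K = 2, i_1 = i_2, and p = 1; (c) K = 2, |i_1 − i_2| = 1, and p = 0. -/

import Mathlib

open Polynomial Real

/-- The Chebyshev polynomial of the second kind rescaled to `(-2, 2)`:
`P n (x) = U n (x / 2)`. -/
noncomputable def P (n : ℕ) : Polynomial ℝ :=
  (Polynomial.Chebyshev.U ℝ n).comp (Polynomial.C 2⁻¹ * X)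


lemma laguerre_aux (S : Multiset ℝ) (a : ℝ) :
    let p : ℝ[X] := (S.map (fun b => X - C b)).prod
    0 ≤ (derivative p).eval a ^ 2 - p.eval a * (derivative (derivative p)).eval a ∧
    (S ≠ 0 → p.eval a ≠ 0 →
      0 < (derivative p).eval a ^ 2 - p.eval a * (derivative (derivative p)).eval a) := by
  induction S using Multiset.induction_on with
  | empty => simp
  | cons b S ih =>
    simp only [Multiset.map_cons, Multiset.prod_cons] at ih ⊢
    set q : ℝ[X] := (S.map (fun b => X - C b)).prod with hq
    have key : (derivative ((X - C b) * q)).eval a ^ 2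
        - ((X - C b) * q).eval a * (derivative (derivative ((X - C b) * q))).eval a
        = q.eval a ^ 2 + (a - b) ^ 2 * ((derivative q).eval a ^ 2
          - q.eval a * (derivative (derivative q)).eval a) := by
      simp [derivative_mul]
      ring
    rw [key]
    have h1 := mul_nonneg (sq_nonneg (a - b)) ih.1
    refine ⟨by positivity, fun _ h => ?_⟩
    have hq0 : q.eval a ≠ 0 := by
      intro h0; apply h; simp [h0]
    have : 0 < q.eval a ^ 2 := by positivity
    linarith

lemma splits_of_real_roots (h : ℝ[X]) (hr : ∀ z : ℂ, aeval z h = 0 → z.im = 0) : h.Splits := by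
  apply Splits.of_splits_map (algebraMap ℝ ℂ) (IsAlgClosed.splits _)
  intro z hz
  have h2 := (mem_roots'.1 hz).2
  have : aeval z h = 0 := by
    rw [IsRoot.def, eval_map_algebraMap] at h2; exact h2
  refine ⟨z.re, ?_⟩
  apply Complex.ext <;> simp [hr z this]

lemma laguerre (h : ℝ[X]) (hs : h.Splits) (hd : h.natDegree ≠ 0) (a : ℝ) (ha : h.eval a ≠ 0) :
    0 < (derivative h).eval a ^ 2 - h.eval a * (derivative (derivative h)).eval a := by
  obtain ⟨S, hS⟩ := splits_iff_exists_multiset.1 hs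
  have h2 := (laguerre_aux S a).2
  have hl : h.leadingCoeff ≠ 0 := by
    intro h0
    rw [leadingCoeff_eq_zero] at h0
    simp [h0] at ha
  have hS0 : S ≠ 0 := by
    rintro rfl
    simp at hS
    rw [hS] at hd
    simp at hd
  generalize h.leadingCoeff = l at hS hl
  subst hS
  simp only [eval_mul, eval_C, derivative_mul, derivative_C, zero_mul, zero_add] at ha ⊢
  have := h2 hS0 (right_ne_zero_of_mul ha)
  have hl2 : 0 < l ^ 2 := by positivity
  have := mul_pos hl2 this
  refine this.trans_eq ?_
  ring

lemma no_two_crit (h : ℝ[X]) (hs : h.Splits) (hd : h.natDegree ≠ 0) (a b : ℝ) (hab : a < b)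
    (hI : ∀ x ∈ Set.Icc a b, h.eval x ≠ 0) (ha : (derivative h).eval a = 0)
    (hb : (derivative h).eval b = 0) : False := by
  have hanti : StrictAntiOn (fun x => (derivative h).eval x / h.eval x) (Set.Icc a b) := by
    apply strictAntiOn_of_deriv_neg (convex_Icc a b)
    · exact ContinuousOn.div (derivative h).continuous.continuousOn h.continuous.continuousOn hI
    · intro x hx
      have hx' := interior_subset hx
      have h0 := hI x hx'
      have := laguerre h hs hd x h0
      rw [(((derivative h).hasDerivAt x).fun_div (h.hasDerivAt x) h0).deriv]
      apply div_neg_of_neg_of_pos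
      · nlinarith
      · positivity
  have := hanti (Set.left_mem_Icc.2 hab.le) (Set.right_mem_Icc.2 hab.le) hab
  simp [ha, hb] at this

lemma rolle_poly (f : ℝ[X]) (a b : ℝ) (hab : a < b) (ha : f.eval a = 0) (hb : f.eval b = 0) :
    ∃ x, a < x ∧ x < b ∧ (derivative f).eval x = 0 := by
  obtain ⟨x, hx, h⟩ := exists_deriv_eq_zero (f := fun x => f.eval x) hab
    f.continuous.continuousOn (by rw [ha, hb])
  rw [Polynomial.deriv] at h
  exact ⟨x, hx.1, hx.2, h⟩

lemma three_roots_sorted (h : ℝ[X]) (hs : h.Splits) (c : ℝ) (hf : h + C c ≠ 0) (t₁ t₂ t₃ : ℝ)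
    (h12 : t₁ ≤ t₂) (h23 : t₂ ≤ t₃)
    (hI : ∀ x ∈ Set.Icc t₁ t₃, h.eval x ≠ 0)
    (hdvd : (X - C t₁) * (X - C t₂) * (X - C t₃) ∣ h + C c) : False := by
  have hd : h.natDegree ≠ 0 := by
    intro h0
    rw [natDegree_eq_zero] at h0
    obtain ⟨e, rfl⟩ := h0
    have h1 := natDegree_le_of_dvd hdvd hf
    rw [← C_add, natDegree_C] at h1
    have : ((X - C t₁) * (X - C t₂) * (X - C t₃)).natDegree = 3 := by
      compute_degree!
    omega
  obtain ⟨q, hq⟩ := hdvd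
  set f := h + C c with hfdef
  have hder : derivative h = derivative f := by simp [hfdef]
  have e1 : f.eval t₁ = 0 := by simp [hq]
  have e2 : f.eval t₂ = 0 := by simp [hq]
  have e3 : f.eval t₃ = 0 := by simp [hq]
  rcases h12.eq_or_lt with h12 | h12 <;> rcases h23.eq_or_lt with h23 | h23
  · subst h12 h23
    have := laguerre h hs hd t₁ (hI _ (by simp))
    rw [hder, hq] at this
    simp [derivative_mul] at this
  · subst h12
    obtain ⟨x, hx1, hx2, hx⟩ := rolle_poly f _ _ h23 e2 e3
    refine no_two_crit h hs hd t₁ x hx1 (fun y hy => hI y ⟨hy.1, hy.2.trans hx2.le⟩) ?_ ?_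
    · rw [hder, hq]; simp [derivative_mul]
    · rw [hder, hx]
  · subst h23
    obtain ⟨x, hx1, hx2, hx⟩ := rolle_poly f _ _ h12 e1 e2
    refine no_two_crit h hs hd x t₂ hx2 (fun y hy => hI y ⟨hx1.le.trans hy.1, hy.2⟩) ?_ ?_
    · rw [hder, hx]
    · rw [hder, hq]; simp [derivative_mul]
  · obtain ⟨x, hx1, hx2, hx⟩ := rolle_poly f _ _ h12 e1 e2
    obtain ⟨y, hy1, hy2, hy⟩ := rolle_poly f _ _ h23 e2 e3
    refine no_two_crit h hs hd x y (hx2.trans hy1)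
      (fun z hz => hI z ⟨hx1.le.trans hz.1, hz.2.trans hy2.le⟩) ?_ ?_
    · rw [hder, hx]
    · rw [hder, hy]

lemma three_roots (h : ℝ[X]) (hs : h.Splits) (c : ℝ) (hf : h + C c ≠ 0) (I : Set ℝ)
    (hIc : I.OrdConnected) (t₁ t₂ t₃ : ℝ) (h1 : t₁ ∈ I) (h2 : t₂ ∈ I) (h3 : t₃ ∈ I)
    (hI : ∀ x ∈ I, h.eval x ≠ 0)
    (hdvd : (X - C t₁) * (X - C t₂) * (X - C t₃) ∣ h + C c) : False := by
  have key : ∀ a b d : ℝ, a ∈ I → d ∈ I → a ≤ b → b ≤ d →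
      (X - C a) * (X - C b) * (X - C d) = (X - C t₁) * (X - C t₂) * (X - C t₃) → False := by
    intro a b d ha hd hab hbd he
    exact three_roots_sorted h hs c hf a b d hab hbd (fun x hx => hI x (hIc.out ha hd hx))
      (he ▸ hdvd)
  rcases le_total t₁ t₂ with a | a <;> rcases le_total t₂ t₃ with b | b <;>
    rcases le_total t₁ t₃ with d | d
  · exact key t₁ t₂ t₃ h1 h3 a b (by ring)
  · exact key t₁ t₂ t₃ h1 h3 a b (by ring)
  · exact key t₁ t₃ t₂ h1 h2 d b (by ring)
  · exact key t₃ t₁ t₂ h3 h2 d a (by ring)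
  · exact key t₂ t₁ t₃ h2 h3 a d (by ring)
  · exact key t₂ t₃ t₁ h2 h1 b d (by ring)
  · exact key t₃ t₂ t₁ h3 h1 b a (by ring)
  · exact key t₃ t₂ t₁ h3 h1 b a (by ring)

lemma P_eval_cos (n : ℕ) (φ : ℂ) :
    aeval (2 * Complex.cos φ) (P n) * Complex.sin φ = Complex.sin ((n + 1) * φ) := by
  have h := Polynomial.Chebyshev.U_complex_cos φ n
  rw [← Polynomial.Chebyshev.map_U (algebraMap ℝ ℂ), eval_map_algebraMap] at h
  have e : aeval (2 * Complex.cos φ) (P n)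
      = aeval (Complex.cos φ) (Polynomial.Chebyshev.U ℝ n) := by
    rw [P, aeval_comp]
    congr 1
    simp
  rw [e, h]
  simp

lemma P_eval_sin (i : ℕ) (θ : ℝ) :
    (P (2 * i)).eval (2 * Real.sin θ) * Real.cos θ = (-1) ^ i * Real.cos ((2 * i + 1) * θ) := by
  have h := Polynomial.Chebyshev.U_real_cos (Real.pi / 2 - θ) (2 * i : ℕ)
  rw [Real.cos_pi_div_two_sub, Real.sin_pi_div_two_sub] at h
  have e : (P (2 * i)).eval (2 * Real.sin θ)
      = (Polynomial.Chebyshev.U ℝ (2 * i : ℕ)).eval (Real.sin θ) := by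
    rw [P, eval_comp]
    congr 1
    simp
  rw [e, h]
  have : (((2 * i : ℕ) : ℤ) + 1 : ℝ) * (Real.pi / 2 - θ)
      = Real.pi / 2 - ((2 * i + 1) * θ) + i * Real.pi := by
    push_cast; ring
  rw [this, Real.sin_add_nat_mul_pi, Real.sin_pi_div_two_sub]

lemma im_cos_of_sin (a : ℕ) (ha : a ≠ 0) (φ : ℂ) (h : Complex.sin (a * φ) = 0) :
    (2 * Complex.cos φ).im = 0 := by
  obtain ⟨k, hk⟩ := Complex.sin_eq_zero_iff.1 h
  have ha' : (a : ℂ) ≠ 0 := by exact_mod_cast ha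
  have : φ = ((k * Real.pi / a : ℝ) : ℂ) := by
    push_cast; field_simp; rw [mul_comm, hk]
  rw [this]
  generalize (k * Real.pi / a : ℝ) = r
  simp

lemma im_cos_of_cos (a : ℕ) (φ : ℂ) (h : Complex.cos (a * φ) = 0) :
    (2 * Complex.cos φ).im = 0 := by
  rcases Nat.eq_zero_or_pos a with rfl | ha
  · simp at h
  apply im_cos_of_sin (2 * a) (by omega)
  have : ((2 * a : ℕ) : ℂ) * φ = 2 * (a * φ) := by push_cast; ring
  rw [this, Complex.sin_two_mul, h, mul_zero]

lemma exists_two_cos (z : ℂ) : ∃ φ, z = 2 * Complex.cos φ := by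
  obtain ⟨φ, h⟩ := Complex.cos_surjective (z / 2)
  exact ⟨φ, by rw [h]; ring⟩

lemma real_sub (n : ℕ) (hn : 1 ≤ n) (z : ℂ) (h : aeval z (P (2 * n)) - 1 = 0) : z.im = 0 := by
  obtain ⟨φ, rfl⟩ := exists_two_cos z
  have h1 := P_eval_cos (2 * n) φ
  rw [sub_eq_zero.1 h, one_mul] at h1
  have h2 := Complex.sin_sub_sin (((2 * n : ℕ) + 1) * φ) φ
  rw [← h1, sub_self] at h2
  have e1 : ((((2 * n : ℕ) : ℂ) + 1) * φ - φ) / 2 = n * φ := by push_cast; ring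
  have e2 : ((((2 * n : ℕ) : ℂ) + 1) * φ + φ) / 2 = (n + 1 : ℕ) * φ := by push_cast; ring
  rw [e1, e2] at h2
  rcases mul_eq_zero.1 h2.symm with h3 | h3
  · exact im_cos_of_sin n (by omega) φ (by simpa using h3)
  · exact im_cos_of_cos _ φ h3

lemma real_add (n : ℕ) (z : ℂ) (h : aeval z (P (2 * n)) + 1 = 0) : z.im = 0 := by
  obtain ⟨φ, rfl⟩ := exists_two_cos z
  have h1 := P_eval_cos (2 * n) φ
  rw [eq_neg_of_add_eq_zero_left h] at h1
  have h2 := Complex.sin_add_sin (((2 * n : ℕ) + 1) * φ) φ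
  rw [← h1] at h2
  have e1 : ((((2 * n : ℕ) : ℂ) + 1) * φ - φ) / 2 = n * φ := by push_cast; ring
  have e2 : ((((2 * n : ℕ) : ℂ) + 1) * φ + φ) / 2 = (n + 1 : ℕ) * φ := by push_cast; ring
  rw [e1, e2] at h2
  have h2' : 2 * Complex.sin ((n + 1 : ℕ) * φ) * Complex.cos (n * φ) = 0 := by
    rw [← h2]; ring
  rcases mul_eq_zero.1 h2' with h3 | h3
  · exact im_cos_of_sin (n + 1) (by omega) φ (by simpa using h3)
  · exact im_cos_of_cos _ φ h3

lemma real_adj (n : ℕ) (z : ℂ)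
    (h : aeval z (P (2 * (n + 1))) * aeval z (P (2 * n)) + 1 = 0) : z.im = 0 := by
  obtain ⟨φ, rfl⟩ := exists_two_cos z
  have h1 := P_eval_cos (2 * n) φ
  have h2 := P_eval_cos (2 * (n + 1)) φ
  have h3 : Complex.sin ((2 * n + 2 : ℕ) * φ) ^ 2 = 0 := by
    have e1 : (((2 * n : ℕ) : ℂ) + 1) * φ = (2 * n + 2 : ℕ) * φ - φ := by push_cast; ring
    have e2 : (((2 * (n + 1) : ℕ) : ℂ) + 1) * φ = (2 * n + 2 : ℕ) * φ + φ := by push_cast; ring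
    rw [e1, Complex.sin_sub] at h1
    rw [e2, Complex.sin_add] at h2
    generalize ((2 * n + 2 : ℕ) : ℂ) * φ = ψ at *
    have i1 := Complex.sin_sq_add_cos_sq φ
    have i2 := Complex.sin_sq_add_cos_sq ψ
    generalize aeval (2 * Complex.cos φ) (P (2 * (n + 1))) = A at *
    generalize aeval (2 * Complex.cos φ) (P (2 * n)) = B at *
    have h4 : (A * Complex.sin φ) * (B * Complex.sin φ) + Complex.sin φ ^ 2 = 0 := by
      linear_combination Complex.sin φ ^ 2 * h
    rw [h1, h2] at h4
    linear_combination h4 + Complex.sin φ ^ 2 * i2 - Complex.sin ψ ^ 2 * i1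
  exact im_cos_of_sin _ (by omega) φ (pow_eq_zero_iff (two_ne_zero) |>.1 h3)

lemma P_eval_zero (i : ℕ) : (P (2 * i)).eval 0 = (-1) ^ i := by
  have := P_eval_sin i 0
  simpa using this

lemma P_ne_zero (i : ℕ) : P (2 * i) ≠ 0 := by
  intro h
  have := P_eval_zero i
  rw [h, eval_zero] at this
  exact pow_ne_zero i (by norm_num : (-1 : ℝ) ≠ 0) this.symm

lemma P_abs_cos (i : ℕ) (θ : ℝ) (hc : 0 < Real.cos θ) :
    |(P (2 * i)).eval (2 * Real.sin θ)| * Real.cos θ = |Real.cos ((2 * i + 1) * θ)| := by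
  have h := congrArg abs (P_eval_sin i θ)
  rw [abs_mul, abs_mul, abs_of_pos hc, abs_pow, abs_neg, abs_one, one_pow, one_mul] at h
  exact h

lemma P_abs_le (i : ℕ) (θ : ℝ) (hc : 0 < Real.cos θ) :
    |(P (2 * i)).eval (2 * Real.sin θ)| * Real.cos θ ≤ 1 := by
  rw [P_abs_cos i θ hc]
  exact Real.abs_cos_le_one _

lemma cos_pos_small (i : ℕ) (hi : 1 ≤ i) (θ : ℝ) (h : (2 * i + 1) * |θ| ≤ Real.pi / 2) :
    0 < Real.cos θ := by
  have hi' : (1 : ℝ) ≤ i := by exact_mod_cast hi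
  have hp := Real.pi_pos
  have h0 := abs_nonneg θ
  have : |θ| < Real.pi / 2 := by nlinarith
  exact Real.cos_pos_of_mem_Ioo (abs_lt.1 this)

lemma P_small (i : ℕ) (hi : 1 ≤ i) (θ : ℝ) (h : (2 * i + 1) * |θ| ≤ Real.pi / 2) :
    |(P (2 * i)).eval (2 * Real.sin θ)| ≤ 1 - 4 * Real.sin θ ^ 2 := by
  have hc := cos_pos_small i hi θ h
  have hi' : (1 : ℝ) ≤ i := by exact_mod_cast hi
  have hp := Real.pi_pos
  have h0 := abs_nonneg θ
  have e1 : Real.cos ((2 * i + 1) * θ) = Real.cos ((2 * i + 1) * |θ|) := by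
    rw [← Real.cos_abs, abs_mul, abs_of_pos (by positivity : (0 : ℝ) < 2 * i + 1)]
  have e2 : Real.cos (3 * θ) = Real.cos (3 * |θ|) := by
    rw [← Real.cos_abs, abs_mul, abs_of_pos (by norm_num : (0 : ℝ) < 3)]
  have hpos : 0 ≤ Real.cos ((2 * i + 1) * |θ|) := by
    apply Real.cos_nonneg_of_mem_Icc
    constructor
    · have : 0 ≤ (2 * i + 1) * |θ| := by positivity
      linarith
    · exact h
  have hle : Real.cos ((2 * i + 1) * |θ|) ≤ Real.cos (3 * |θ|) := by
    apply Real.cos_le_cos_of_nonneg_of_le_pi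
    · positivity
    · linarith
    · nlinarith
  have h3 := P_abs_cos i θ hc
  rw [e1, abs_of_nonneg hpos] at h3
  rw [← e2, Real.cos_three_mul] at hle
  have h4 := Real.sin_sq_add_cos_sq θ
  refine le_of_mul_le_mul_right ?_ hc
  rw [h3]
  refine hle.trans_eq ?_
  linear_combination 4 * Real.cos θ * h4

lemma P_root (i m : ℕ) (hm : m < 2 * i + 1) (hodd : Odd m) :
    (P (2 * i)).eval (2 * Real.sin (m * (Real.pi / (2 * (2 * i + 1))))) = 0 := by
  have hm' : (m : ℝ) < 2 * i + 1 := by exact_mod_cast hm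
  have hn : (0 : ℝ) < 2 * i + 1 := by positivity
  have h := P_eval_sin i (m * (Real.pi / (2 * (2 * i + 1))))
  have hp := Real.pi_pos
  have hc : 0 < Real.cos (m * (Real.pi / (2 * (2 * i + 1)))) := by
    apply Real.cos_pos_of_mem_Ioo
    constructor
    · have : 0 ≤ m * (Real.pi / (2 * (2 * i + 1))) := by positivity
      linarith
    · rw [← mul_div_assoc, div_lt_div_iff₀ (by positivity) (by positivity)]
      nlinarith
  have e : (2 * i + 1) * (m * (Real.pi / (2 * (2 * i + 1)))) = m * (Real.pi / 2) := by
    field_simp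
  have h0 : Real.cos (m * (Real.pi / 2)) = 0 := by
    obtain ⟨k, rfl⟩ := hodd
    rw [Real.cos_eq_zero_iff]
    exact ⟨k, by push_cast; ring⟩
  rw [e, h0, mul_zero] at h
  exact (mul_eq_zero.1 h).resolve_right hc.ne'

lemma two_dvd (f : ℝ[X]) (a b : ℝ) (hab : a ≠ b) (ha : f.eval a = 0) (hb : f.eval b = 0) :
    (X - C a) * (X - C b) ∣ f := by
  apply IsCoprime.mul_dvd
  · exact isCoprime_X_sub_C_of_isUnit_sub (sub_ne_zero.2 hab).isUnit
  · exact dvd_iff_isRoot.2 ha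
  · exact dvd_iff_isRoot.2 hb

/-- first zero angle -/
noncomputable def ang (i : ℕ) : ℝ := Real.pi / (2 * (2 * i + 1))

lemma ang_pos (i : ℕ) : 0 < ang i := by
  unfold ang
  have := Real.pi_pos
  positivity

lemma ang_mul (i : ℕ) : (2 * i + 1) * ang i = Real.pi / 2 := by
  unfold ang
  field_simp

lemma ang_anti (i j : ℕ) (h : i ≤ j) : ang j ≤ ang i := by
  have h' : (i : ℝ) ≤ j := by exact_mod_cast h
  have h1 := ang_mul i
  have h2 := ang_mul j
  have h3 := ang_pos j
  by_contra! hc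
  have hn : (0 : ℝ) < 2 * i + 1 := by positivity
  nlinarith

lemma ang_le (i : ℕ) (hi : 1 ≤ i) : ang i ≤ Real.pi / 6 := by
  have := ang_anti 1 i hi
  refine this.trans_eq ?_
  unfold ang
  push_cast
  ring

lemma root1 (i : ℕ) (hi : 1 ≤ i) : (P (2 * i)).eval (2 * Real.sin (ang i)) = 0 := by
  have := P_root i 1 (by omega) (by decide)
  simpa [ang] using this

lemma root1_neg (i : ℕ) (hi : 1 ≤ i) : (P (2 * i)).eval (-(2 * Real.sin (ang i))) = 0 := by
  have h1 := P_eval_sin i (ang i)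
  have h2 := P_eval_sin i (-ang i)
  have hc : 0 < Real.cos (ang i) :=
    cos_pos_small i hi _ (by rw [abs_of_pos (ang_pos i), ang_mul])
  rw [root1 i hi] at h1
  rw [Real.sin_neg, Real.cos_neg, mul_neg, mul_neg, Real.cos_neg, ← h1, zero_mul] at h2
  exact (mul_eq_zero.1 h2).resolve_right hc.ne'

lemma root3 (i : ℕ) (hi : 2 ≤ i) : (P (2 * i)).eval (2 * Real.sin (3 * ang i)) = 0 := by
  have := P_root i 3 (by omega) (by decide)
  simpa [ang] using this

lemma exists_angle (x B : ℝ) (hB0 : 0 ≤ B) (hB : B ≤ Real.pi / 2) (hx : |x| ≤ 2 * Real.sin B) :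
    ∃ θ, x = 2 * Real.sin θ ∧ |θ| ≤ B := by
  have hx' := abs_le.1 hx
  have h1 := Real.sin_le_one B
  refine ⟨Real.arcsin (x / 2), ?_, ?_⟩
  · rw [Real.sin_arcsin] <;> linarith
  · rw [abs_le]
    constructor
    · rw [Real.le_arcsin_iff_sin_le ⟨by linarith [Real.pi_pos], by linarith [Real.pi_pos]⟩
        ⟨by linarith, by linarith⟩, Real.sin_neg]
      linarith
    · rw [Real.arcsin_le_iff_le_sin ⟨by linarith, by linarith⟩
        ⟨by linarith [Real.pi_pos], by linarith [Real.pi_pos]⟩]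
      linarith

lemma sin_mono_small (a b : ℝ) (ha : 0 < a) (hab : a ≤ b) (hb : b ≤ Real.pi / 2) :
    2 * Real.sin a ∈ Set.Ioc 0 (2 * Real.sin b) := by
  have h1 : 0 < Real.sin a := Real.sin_pos_of_pos_of_lt_pi ha (by linarith [Real.pi_pos])
  have h2 := Real.sin_le_sin_of_le_of_le_pi_div_two (by linarith [Real.pi_pos]) hb hab
  exact ⟨by linarith, by linarith⟩

lemma small_of_le_ang (i d : ℕ) (h : i ≤ d) (θ : ℝ) (hθ : |θ| ≤ ang d) :
    (2 * i + 1) * |θ| ≤ Real.pi / 2 := by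
  rw [← ang_mul i]
  exact mul_le_mul_of_nonneg_left (hθ.trans (ang_anti i d h)) (by positivity)

lemma three_case (K : ℕ) (i : Fin K → ℕ) (hi : ∀ k, 1 ≤ i k) (e : ℝ) (he : |e| = 1)
    (hK : 3 ≤ K) (hs : ((∏ k, P (2 * i k)) + C e).Splits) : False := by
  classical
  have hcard : (Finset.univ : Finset (Fin K)).card = K := by simp
  obtain ⟨a, ha, hamax⟩ := Finset.exists_max_image (Finset.univ : Finset (Fin K)) i
    (Finset.card_pos.1 (by omega))
  have hc1 := Finset.card_erase_of_mem ha
  obtain ⟨b, hb, hbmax⟩ := Finset.exists_max_image (Finset.univ.erase a) i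
    (Finset.card_pos.1 (by omega))
  have hc2 := Finset.card_erase_of_mem hb
  obtain ⟨d, hd, hdmax⟩ := Finset.exists_max_image ((Finset.univ.erase a).erase b) i
    (Finset.card_pos.1 (by omega))
  set R := ((Finset.univ.erase a).erase b).erase d with hR
  have hprod : ∏ k, P (2 * i k)
      = P (2 * i a) * P (2 * i b) * P (2 * i d) * ∏ k ∈ R, P (2 * i k) := by
    rw [← Finset.mul_prod_erase _ _ ha, ← Finset.mul_prod_erase _ _ hb,
      ← Finset.mul_prod_erase _ _ hd]
    ring
  have hba : i b ≤ i a := hamax b (Finset.mem_univ _)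
  have hdb : i d ≤ i b := hbmax d (Finset.mem_of_mem_erase hd)
  have hB : ang (i d) ≤ Real.pi / 2 := by linarith [ang_le (i d) (hi d), Real.pi_pos]
  have hadd : (∏ k, P (2 * i k)) + C e + C (-e) = ∏ k, P (2 * i k) := by
    rw [add_assoc, ← C_add]; simp
  refine three_roots _ hs (-e) ?_ (Set.Ioc 0 (2 * Real.sin (ang (i d)))) Set.ordConnected_Ioc
    (2 * Real.sin (ang (i a))) (2 * Real.sin (ang (i b))) (2 * Real.sin (ang (i d)))
    (sin_mono_small _ _ (ang_pos _) (ang_anti _ _ (hdb.trans hba)) hB)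
    (sin_mono_small _ _ (ang_pos _) (ang_anti _ _ hdb) hB)
    (sin_mono_small _ _ (ang_pos _) le_rfl hB) ?_ ?_
  · rw [hadd]
    exact Finset.prod_ne_zero_iff.2 (fun k _ => P_ne_zero _)
  · intro x hx h0
    obtain ⟨θ, rfl, hθ⟩ := exists_angle x _ (ang_pos _).le hB (by rw [abs_of_pos hx.1]; exact hx.2)
    have hsin : 0 < Real.sin θ := by linarith [hx.1]
    have hc := cos_pos_small (i d) (hi d) θ (small_of_le_ang _ _ le_rfl θ hθ)
    have hA := P_abs_le (i a) θ hc
    have hBb := P_abs_le (i b) θ hc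
    have hD := P_small (i d) (hi d) θ (small_of_le_ang _ _ le_rfl θ hθ)
    have hRest : |(∏ k ∈ R, P (2 * i k)).eval (2 * Real.sin θ)| ≤ 1 := by
      rw [eval_prod, Finset.abs_prod]
      apply Finset.prod_le_one
      · intro k _; exact abs_nonneg _
      · intro k hk
        have := P_small (i k) (hi k) θ
          (small_of_le_ang _ _ (hdmax k (Finset.mem_of_mem_erase hk)) θ hθ)
        nlinarith [sq_nonneg (Real.sin θ)]
    rw [hprod] at h0
    simp only [eval_add, eval_mul, eval_C] at h0
    have h1 : |(P (2 * i a)).eval (2 * Real.sin θ)| * |(P (2 * i b)).eval (2 * Real.sin θ)| *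
        |(P (2 * i d)).eval (2 * Real.sin θ)| *
        |(∏ k ∈ R, P (2 * i k)).eval (2 * Real.sin θ)| = 1 := by
      rw [← abs_mul, ← abs_mul, ← abs_mul, eq_neg_of_add_eq_zero_left h0, abs_neg, he]
    have nA := abs_nonneg ((P (2 * i a)).eval (2 * Real.sin θ))
    have nB := abs_nonneg ((P (2 * i b)).eval (2 * Real.sin θ))
    have nD := abs_nonneg ((P (2 * i d)).eval (2 * Real.sin θ))
    have nR := abs_nonneg ((∏ k ∈ R, P (2 * i k)).eval (2 * Real.sin θ))
    generalize |(P (2 * i a)).eval (2 * Real.sin θ)| = A at *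
    generalize |(P (2 * i b)).eval (2 * Real.sin θ)| = B at *
    generalize |(P (2 * i d)).eval (2 * Real.sin θ)| = D at *
    generalize |(∏ k ∈ R, P (2 * i k)).eval (2 * Real.sin θ)| = E at *
    have hAB : (A * Real.cos θ) * (B * Real.cos θ) ≤ 1 := by
      apply mul_le_one₀ hA (by positivity) hBb
    have hDE : D * E ≤ 1 - 4 * Real.sin θ ^ 2 :=
      (mul_le_of_le_one_right nD hRest).trans hD
    have h2 : Real.cos θ ^ 2 = ((A * Real.cos θ) * (B * Real.cos θ)) * (D * E) := by
      calc Real.cos θ ^ 2 = Real.cos θ ^ 2 * (A * B * D * E) := by rw [h1, mul_one]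
        _ = _ := by ring
    have h3 : Real.cos θ ^ 2 ≤ D * E := by
      rw [h2]; exact mul_le_of_le_one_left (by positivity) hAB
    nlinarith [Real.sin_sq_add_cos_sq θ, pow_pos hsin 2]
  · rw [hadd, hprod]
    refine Dvd.dvd.mul_right (mul_dvd_mul (mul_dvd_mul ?_ ?_) ?_) _ <;>
    · apply dvd_iff_isRoot.2
      exact root1 _ (hi _)

lemma two_small (u v : ℕ) (hv : 1 ≤ v) (θ : ℝ) (h0 : Real.sin θ ≠ 0) (hθ : |θ| ≤ ang v) :
    |(P (2 * u)).eval (2 * Real.sin θ)| * |(P (2 * v)).eval (2 * Real.sin θ)| < 1 := by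
  have hc := cos_pos_small v hv θ (small_of_le_ang _ _ le_rfl θ hθ)
  have hA := P_abs_le u θ hc
  have hD := P_small v hv θ (small_of_le_ang _ _ le_rfl θ hθ)
  have nA := abs_nonneg ((P (2 * u)).eval (2 * Real.sin θ))
  have nD := abs_nonneg ((P (2 * v)).eval (2 * Real.sin θ))
  generalize |(P (2 * u)).eval (2 * Real.sin θ)| = A at *
  generalize |(P (2 * v)).eval (2 * Real.sin θ)| = D at *
  have hs : 0 < Real.sin θ ^ 2 := by positivity
  have h1 := Real.cos_le_one θ
  have h2 : A * D * Real.cos θ ≤ D := by nlinarith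
  have h3 := Real.sin_sq_add_cos_sq θ
  have h4 : D < Real.cos θ := by nlinarith
  by_contra! hcon
  nlinarith

lemma two_case (u v : ℕ) (hv : 1 ≤ v) (huv : v ≤ u) (e : ℝ) (he : e = 1 ∨ e = -1)
    (hs : (P (2 * u) * P (2 * v) + C e).Splits) : e = -(-1) ^ (u + v) ∧ u ≤ v + 1 := by
  have hu : 1 ≤ u := hv.trans huv
  have hadd : P (2 * u) * P (2 * v) + C e + C (-e) = P (2 * u) * P (2 * v) := by
    rw [add_assoc, ← C_add]; simp
  have hne : P (2 * u) * P (2 * v) ≠ 0 := mul_ne_zero (P_ne_zero _) (P_ne_zero _)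
  have heabs : |e| = 1 := by rcases he with rfl | rfl <;> simp
  have hpi := Real.pi_pos
  have hB : ang v ≤ Real.pi / 2 := by linarith [ang_le v hv]
  have hvv := sin_mono_small _ _ (ang_pos v) le_rfl hB
  have huu := sin_mono_small _ _ (ang_pos u) (ang_anti _ _ huv) hB
  have hsmall : ∀ θ, Real.sin θ ≠ 0 → |θ| ≤ ang v →
      (P (2 * u) * P (2 * v) + C e).eval (2 * Real.sin θ) ≠ 0 := by
    intro θ h0 hθ h
    have h1 := two_small u v hv θ h0 hθ
    simp only [eval_add, eval_mul, eval_C] at h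
    rw [← abs_mul, eq_neg_of_add_eq_zero_left h, abs_neg, heabs] at h1
    exact lt_irrefl _ h1
  have hsign : e = -(-1) ^ (u + v) := by
    by_contra hcon
    have hes : e = (-1) ^ (u + v) := by
      rcases neg_one_pow_eq_or ℝ (u + v) with h | h <;> rw [h] at hcon ⊢ <;>
        rcases he with rfl | rfl <;> simp_all
    refine three_roots _ hs (-e) (by rwa [hadd])
      (Set.Icc (-(2 * Real.sin (ang v))) (2 * Real.sin (ang v))) Set.ordConnected_Icc
      (2 * Real.sin (ang u)) (-(2 * Real.sin (ang u))) (2 * Real.sin (ang v))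
      ⟨by linarith [huu.1, hvv.1], huu.2⟩ ⟨by linarith [huu.2], by linarith [huu.1, hvv.1]⟩
      ⟨by linarith [hvv.1], le_rfl⟩ ?_ ?_
    · intro x hx
      obtain ⟨θ, rfl, hθ⟩ := exists_angle x _ (ang_pos _).le hB (abs_le.2 hx)
      by_cases h0 : Real.sin θ = 0
      · rw [h0, mul_zero]
        simp only [eval_add, eval_mul, eval_C, P_eval_zero]
        rw [← pow_add, ← hes]
        rcases he with rfl | rfl <;> norm_num
      · exact hsmall θ h0 hθ
    · rw [hadd]
      refine mul_dvd_mul (two_dvd _ _ _ ?_ (root1 u hu) (root1_neg u hu))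
        (dvd_iff_isRoot.2 (root1 v hv))
      linarith [huu.1]
  refine ⟨hsign, ?_⟩
  by_contra! hlt
  have hu3 : 3 * ang u ≤ Real.pi / 2 := by linarith [ang_le u hu]
  have hM : max (ang v) (3 * ang u) ≤ Real.pi / 2 := max_le hB hu3
  have hap := ang_pos u
  have havp := ang_pos v
  have h1M : ang u ≤ max (ang v) (3 * ang u) := (ang_anti _ _ huv).trans (le_max_left _ _)
  have hdist : 2 * Real.sin (ang u) ≠ 2 * Real.sin (3 * ang u) := by
    have := Real.sin_lt_sin_of_lt_of_le_pi_div_two (x := ang u) (y := 3 * ang u)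
      (by linarith) hu3 (by linarith)
    linarith
  refine three_roots _ hs (-e) (by rwa [hadd])
    (Set.Ioc 0 (2 * Real.sin (max (ang v) (3 * ang u)))) Set.ordConnected_Ioc
    (2 * Real.sin (ang u)) (2 * Real.sin (3 * ang u)) (2 * Real.sin (ang v))
    (sin_mono_small _ _ hap h1M hM) (sin_mono_small _ _ (by linarith) (le_max_right _ _) hM)
    (sin_mono_small _ _ havp (le_max_left _ _) hM) ?_ ?_
  · intro x hx
    obtain ⟨θ, rfl, hθ⟩ := exists_angle x _ (by positivity) hM
      (by rw [abs_of_pos hx.1]; exact hx.2)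
    have hsin : 0 < Real.sin θ := by linarith [hx.1]
    by_cases hθv : |θ| ≤ ang v
    · exact hsmall θ hsin.ne' hθv
    · push Not at hθv
      have hθu : |θ| ≤ 3 * ang u := by
        rcases le_max_iff.1 hθ with h | h
        · linarith
        · exact h
      have hθpos : 0 < θ := by
        by_contra! hneg
        have := Real.sin_nonpos_of_nonpos_of_neg_pi_le hneg
          (by linarith [(abs_le.1 (hθ.trans hM)).1])
        linarith
      rw [abs_of_pos hθpos] at hθv hθu
      have hc : 0 < Real.cos θ := by
        apply Real.cos_pos_of_mem_Ioo
        constructor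
        · linarith
        · linarith [ang_le u hu, ang_anti 2 u (by omega),
            show ang 2 = Real.pi / 10 by unfold ang; push_cast; ring]
      intro h
      simp only [eval_add, eval_mul, eval_C] at h
      have p1 := P_eval_sin u θ
      have p2 := P_eval_sin v θ
      have hcc : Real.cos ((2 * u + 1) * θ) * Real.cos ((2 * v + 1) * θ) = Real.cos θ ^ 2 := by
        have h5 : ((P (2 * u)).eval (2 * Real.sin θ) * Real.cos θ) *
          ((P (2 * v)).eval (2 * Real.sin θ) * Real.cos θ) = (-1) ^ (u + v) * Real.cos θ ^ 2 := by
          rw [hsign] at h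
          linear_combination Real.cos θ ^ 2 * h
        rw [p1, p2] at h5
        have h6 : ((-1 : ℝ) ^ (u + v)) * (Real.cos ((2 * u + 1) * θ) * Real.cos ((2 * v + 1) * θ))
            = (-1) ^ (u + v) * Real.cos θ ^ 2 := by
          rw [← h5, pow_add]; ring
        exact mul_left_cancel₀ (pow_ne_zero _ (by norm_num)) h6
      have huv' : (v : ℝ) + 2 ≤ u := by exact_mod_cast hlt
      have hd : ((2 * u + 1) * θ - (2 * v + 1) * θ) ≤ Real.pi := by
        have a1 : (2 * u + 1) * θ ≤ (2 * u + 1) * (3 * ang u) :=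
          mul_le_mul_of_nonneg_left hθu (by positivity)
        have a2 : (2 * v + 1) * ang v ≤ (2 * v + 1) * θ :=
          mul_le_mul_of_nonneg_left hθv.le (by positivity)
        have a3 := ang_mul u
        have a4 := ang_mul v
        nlinarith
      have hlt2 : Real.cos ((2 * u + 1) * θ - (2 * v + 1) * θ) < Real.cos (2 * θ) := by
        apply Real.cos_lt_cos_of_nonneg_of_le_pi (by linarith) hd
        nlinarith
      have h7 := Real.cos_le_one ((2 * u + 1) * θ + (2 * v + 1) * θ)
      rw [Real.cos_add] at h7
      rw [Real.cos_sub, Real.cos_two_mul] at hlt2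
      linarith
  · rw [hadd]
    exact mul_dvd_mul (two_dvd _ _ _ hdist (root1 u hu) (root3 u (by omega)))
      (dvd_iff_isRoot.2 (root1 v hv))

theorem prod_P_pm_one_real_roots_iff (K : ℕ) (hK : 1 ≤ K) (i : Fin K → ℕ)
    (hi : ∀ k, 1 ≤ i k) (p : ℕ) (hp : p = 0 ∨ p = 1) :
    (∀ z : ℂ,
        (Polynomial.aeval z) ((∏ k, P (2 * i k)) + Polynomial.C ((-1 : ℝ) ^ p)) = 0 →
        z.im = 0) ↔
      (K = 1 ∨
        (K = 2 ∧ (∀ k l : Fin K, i k = i l) ∧ p = 1) ∨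
        (K = 2 ∧ (∃ k l : Fin K, i k = i l + 1) ∧ p = 0)) := by
  have he : ((-1 : ℝ) ^ p) = 1 ∨ ((-1 : ℝ) ^ p) = -1 := neg_one_pow_eq_or ℝ p
  constructor
  · intro hreal
    have hs := splits_of_real_roots _ hreal
    by_cases hK3 : 3 ≤ K
    · exact (three_case K i hi _ (by rcases he with h | h <;> simp [h]) hK3 hs).elim
    by_cases hK1 : K = 1
    · exact Or.inl hK1
    have hK2 : K = 2 := by omega
    subst hK2
    right
    rw [Fin.prod_univ_two] at hs
    have key : ∀ u v : ℕ, (((-1 : ℝ) ^ p) = -(-1) ^ (u + v) ∧ u ≤ v + 1) → v ≤ u →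
        (p = 1 ∧ u = v) ∨ (p = 0 ∧ u = v + 1) := by
      rintro u v ⟨h1, h2⟩ h3
      have h4 : u = v ∨ u = v + 1 := by omega
      rcases hp with rfl | rfl
      · rcases h4 with rfl | rfl
        · rw [← two_mul, pow_mul] at h1; norm_num at h1
        · simp
      · rcases h4 with rfl | rfl
        · simp
        · rw [show v + 1 + v = 2 * v + 1 by ring, pow_succ _ (2 * v), pow_mul] at h1; norm_num at h1
    rcases le_total (i 1) (i 0) with h | h
    · rcases key _ _ (two_case _ _ (hi 1) h _ he hs) h with ⟨h1, h2⟩ | ⟨h1, h2⟩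
      · left
        refine ⟨rfl, ?_, h1⟩
        intro k l
        fin_cases k <;> fin_cases l <;> simp [h2]
      · right
        exact ⟨rfl, ⟨0, 1, h2⟩, h1⟩
    · rw [mul_comm] at hs
      rcases key _ _ (two_case _ _ (hi 0) h _ he hs) h with ⟨h1, h2⟩ | ⟨h1, h2⟩
      · left
        refine ⟨rfl, ?_, h1⟩
        intro k l
        fin_cases k <;> fin_cases l <;> simp [h2]
      · right
        exact ⟨rfl, ⟨1, 0, h2⟩, h1⟩
  · rintro (rfl | ⟨rfl, h, rfl⟩ | ⟨rfl, ⟨k, l, h⟩, rfl⟩) z hz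
    · simp only [Finset.univ_unique, Finset.prod_singleton, map_add, aeval_C] at hz
      rcases he with h | h <;> rw [h] at hz
      · exact real_add _ z (by simpa using hz)
      · exact real_sub _ (hi default) z (by simpa [sub_eq_add_neg] using hz)
    · rw [Fin.prod_univ_two, h 1 0] at hz
      have hz' : (aeval z (P (2 * i 0)) - 1) * (aeval z (P (2 * i 0)) + 1) = 0 := by
        simp at hz
        linear_combination hz
      rcases mul_eq_zero.1 hz' with h1 | h1
      · exact real_sub _ (hi 0) z h1
      · exact real_add _ z h1
    · rw [Fin.prod_univ_two] at hz
      have hz' : aeval z (P (2 * i 0)) * aeval z (P (2 * i 1)) + 1 = 0 := by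
        simpa using hz
      apply real_adj (i l) z
      rw [← h]
      fin_cases k <;> fin_cases l
      · simp at h
      · exact hz'
      · rw [mul_comm]; exact hz'
      · simp at h
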